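/- arXiv:1110.5381 — 2 statements merged into one kernel-verified Lean document; each statement's English description precedes it below -/
import Mathlib

section
/- Under assumptions (A1)–(A4) on the triangular array, the row sums S_n = ∑_{j=1}^n Y_{n,j} converge in distribution as n → ∞ to a compound Poisson random variable S = ∑_{j=1}^{N} ξ_j, where N is Poisson with intensity μ independent of the i.i.d. sequence (ξ_j) each distributed as ξ; equivalently, for every t ∈ ℝ, E[e^{itS_n}] → exp(μ(φ(t) − 1)). -/
/-!
The proof is the classical big-block argument. Fix `t` and put `c = μ (φ t - 1)`, so `Re c ≤ 0`.
Write `ψ(a, b]` for the characteristic function at `t` of `∑_{a < j ≤ b} Y n j`.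

* Decoupling (`decouple`): deleting `m` variables after position `b` changes a characteristic
  function by at most `2 m C1 / n`, as each variable is nonzero with probability at most `C1 / n`;
  across the gap so created, (A3) factorises the expectation up to `2 α (m + 1)`. Hence `ψ(a, n]`
  is close to `ψ(a, b] ψ(b, n]`.
* One block (`charFn_block`): two variables of the same block are rarely both nonzero, which by
  (A1) gives `ψ(a, b] = 1 + ∑ (φ_{n,j} t - 1) + O(((b - a) / n)²)`. Integrating (A4) gives
  `φ_{n,j} t - 1 = c / n + O(n⁻²)` (`charFn_single`), so `ψ(a, b]` is `exp (c (b - a) / n)` up to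
  `O(((b - a) / n)²)` (`block_exp`).
* Telescoping over `K` blocks of length about `n / K` (`telescope`) bounds the distance from
  `ψ(0, n]` to `exp c` by `4 K m C1 / n + 2 K α (m + 1) + O(1 / K) + O(1 / n)`. Choosing `K`
  large, then `m`, then `n` concludes.
-/

open MeasureTheory ProbabilityTheory Filter Set

/-- The characteristic function of a real random variable `X` under the measure `P`. -/
noncomputable def charFn {Ω : Type*} [MeasurableSpace Ω] (P : Measure Ω) (X : Ω → ℝ) (t : ℝ) : ℂ :=
  ∫ ω, Complex.exp (Complex.I * t * X ω) ∂P

/-! ### Elementary facts on characteristic functions -/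

lemma norm_expI (t x : ℝ) : ‖Complex.exp (Complex.I * t * x)‖ = 1 := by
  rw [mul_assoc, ← Complex.ofReal_mul, Complex.norm_exp_I_mul_ofReal]

lemma norm_expI_sub_one_le (t x : ℝ) : ‖Complex.exp (Complex.I * t * x) - 1‖ ≤ |t| * |x| := by
  rw [mul_assoc, ← Complex.ofReal_mul, ← abs_mul]
  exact Real.norm_exp_I_mul_ofReal_sub_one_le

lemma expI_add (t x y : ℝ) : Complex.exp (Complex.I * t * ((x + y : ℝ) : ℂ)) =
    Complex.exp (Complex.I * t * x) * Complex.exp (Complex.I * t * y) := by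
  rw [← Complex.exp_add]; push_cast; ring_nf

lemma integrable_expI {Ω : Type*} {mΩ : MeasurableSpace Ω} (P : Measure Ω) [IsProbabilityMeasure P]
    {X : Ω → ℝ} (hX : Measurable X) (t : ℝ) :
    Integrable (fun ω => Complex.exp (Complex.I * t * X ω)) P := by
  refine Integrable.of_bound (C := 1) (by fun_prop) (ae_of_all _ fun ω => ?_)
  rw [norm_expI]

lemma norm_charFn_le {Ω : Type*} {mΩ : MeasurableSpace Ω} (P : Measure Ω) [IsProbabilityMeasure P]
    (X : Ω → ℝ) (t : ℝ) : ‖charFn P X t‖ ≤ 1 := by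
  have := norm_integral_le_of_norm_le_const (μ := P) (C := 1)
    (f := fun ω => Complex.exp (Complex.I * t * X ω)) (ae_of_all _ fun ω => by rw [norm_expI])
  simpa [charFn] using this

lemma charFn_zero {Ω : Type*} {mΩ : MeasurableSpace Ω} (P : Measure Ω) [IsProbabilityMeasure P]
    (X : Ω → ℝ) : charFn P X 0 = 1 := by
  simp [charFn]

lemma charFn_differentiable {Ω : Type*} {mΩ : MeasurableSpace Ω} (P : Measure Ω)
    [IsProbabilityMeasure P] {X : Ω → ℝ} (hX : Measurable X) (hi : Integrable X P) :
    Differentiable ℝ (charFn P X) := by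
  intro t
  have := (hasDerivAt_integral_of_dominated_loc_of_deriv_le (μ := P) (s := Set.univ) (x₀ := t)
    (F := fun (t : ℝ) ω => Complex.exp (Complex.I * t * X ω))
    (F' := fun (t : ℝ) ω => Complex.exp (Complex.I * t * X ω) * (Complex.I * X ω))
    (bound := fun ω => |X ω|) Filter.univ_mem
    (Eventually.of_forall fun s => (integrable_expI P hX s).aestronglyMeasurable)
    (integrable_expI P hX t) (by fun_prop) (ae_of_all _ fun ω s _ => by
      rw [norm_mul, norm_expI]; simp) hi.abs (ae_of_all _ fun ω s _ => by
      have h1 : HasDerivAt (fun s : ℝ => Complex.I * (s : ℂ) * (X ω : ℂ))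
          (Complex.I * 1 * X ω) s :=
        ((Complex.ofRealCLM.hasDerivAt (x := s)).const_mul Complex.I).mul_const _
      simpa using h1.cexp)).2
  exact this.differentiableAt

lemma charFn_sub_le_prob {Ω : Type*} {mΩ : MeasurableSpace Ω} (P : Measure Ω)
    [IsProbabilityMeasure P] {X Z : Ω → ℝ} (hX : Measurable X) (hZ : Measurable Z) (t : ℝ) :
    ‖charFn P X t - charFn P Z t‖ ≤ 2 * P.real {ω | X ω ≠ Z ω} := by
  have hs : MeasurableSet {ω | X ω ≠ Z ω} := (measurableSet_eq_fun hX hZ).compl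
  unfold charFn
  rw [← integral_sub (integrable_expI P hX t) (integrable_expI P hZ t)]
  calc _ ≤ ∫ ω, Set.indicator {ω | X ω ≠ Z ω} (fun _ => (2 : ℝ)) ω ∂P := by
        refine norm_integral_le_of_norm_le ((integrable_const _).indicator hs)
          (ae_of_all _ fun ω => ?_)
        by_cases h : X ω = Z ω
        · simp [h]
        · rw [Set.indicator_of_mem (by exact h)]
          refine (norm_sub_le _ _).trans ?_
          rw [norm_expI, norm_expI]; norm_num
    _ = _ := by rw [integral_indicator_const _ hs]; simp [mul_comm]

/-! ### Decoupling past and future -/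

/-- Covariance bound: `U` is measurable with respect to `m`, and `V` has a conditional expectation
given `m` that is within `r` of its mean. -/
lemma cov_le {Ω : Type*} {m mΩ : MeasurableSpace Ω} (hm : m ≤ mΩ) (P : Measure Ω)
    [IsProbabilityMeasure P] {U : Ω → ℂ} {V : Ω → ℝ} (hU : StronglyMeasurable[m] U)
    (hU1 : ∀ ω, ‖U ω‖ ≤ 1) (hV : Integrable V P) {r : ℝ}
    (h : ∀ᵐ ω ∂P, |(P[V | m]) ω - ∫ x, V x ∂P| ≤ r) :
    ‖(∫ ω, U ω * V ω ∂P) - (∫ ω, U ω ∂P) * ((∫ ω, V ω ∂P : ℝ) : ℂ)‖ ≤ r := by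
  have hUm : AEStronglyMeasurable U P := (hU.mono hm).aestronglyMeasurable
  have hUi : Integrable U P := Integrable.of_bound hUm 1 (ae_of_all _ hU1)
  have h1 := condExp_stronglyMeasurable_bilin_of_bound (μ := P)
    (B := (ContinuousLinearMap.lsmul ℝ ℝ : ℝ →L[ℝ] ℂ →L[ℝ] ℂ).flip) hm hU hV 1 (ae_of_all _ hU1)
  have h2 : ∫ ω, U ω * V ω ∂P = ∫ ω, U ω * ((P[V | m]) ω : ℂ) ∂P := by
    have h3 := integral_condExp (μ := P) hm
      (f := fun ω ↦ (ContinuousLinearMap.lsmul ℝ ℝ : ℝ →L[ℝ] ℂ →L[ℝ] ℂ).flip (U ω) (V ω))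
    rw [integral_congr_ae h1] at h3
    simpa [mul_comm] using h3.symm
  have hi : Integrable (fun ω => U ω * ((P[V | m]) ω : ℂ)) P :=
    Integrable.bdd_mul (c := 1) (integrable_condExp.ofReal) hUm (ae_of_all _ hU1)
  rw [h2, ← integral_mul_const, ← integral_sub hi (hUi.mul_const _)]
  have := norm_integral_le_of_norm_le_const (μ := P) (C := r)
    (f := fun ω => U ω * ((P[V | m]) ω : ℂ) - U ω * ((∫ ω, V ω ∂P : ℝ) : ℂ)) (by
      filter_upwards [h] with ω hω
      rw [← mul_sub, norm_mul, ← Complex.ofReal_sub, Complex.norm_real, Real.norm_eq_abs]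
      calc _ ≤ 1 * |(P[V | m]) ω - ∫ x, V x ∂P| := by gcongr; exact hU1 ω
        _ ≤ r := by linarith)
  simpa using this

/-- Block sum over the half-open index interval `(a, b]`. -/
noncomputable def blockSum {Ω : Type*} (y : ℕ → Ω → ℝ) (a b : ℕ) (ω : Ω) : ℝ :=
  ∑ j ∈ Finset.Ioc a b, y j ω

lemma blockSum_add {Ω : Type*} (y : ℕ → Ω → ℝ) {a b c : ℕ} (hab : a ≤ b) (hbc : b ≤ c) (ω : Ω) :
    blockSum y a c ω = blockSum y a b ω + blockSum y b c ω :=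
  (Finset.sum_Ioc_consecutive (fun j => y j ω) hab hbc).symm

lemma blockSum_measurable {Ω : Type*} {mΩ : MeasurableSpace Ω} {y : ℕ → Ω → ℝ}
    (hy : ∀ j, Measurable (y j)) (a b : ℕ) : Measurable (blockSum y a b) := by
  unfold blockSum
  exact Finset.measurable_sum _ fun j _ => hy j

/-- A block sum vanishes unless one of its terms does not; union bound. -/
lemma blockSum_ne_zero_le {Ω : Type*} {mΩ : MeasurableSpace Ω} (P : Measure Ω)
    [IsProbabilityMeasure P] (y : ℕ → Ω → ℝ) {n : ℕ} {q : ℝ}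
    (hq : ∀ j ∈ Finset.Icc 1 n, P.real {ω | y j ω ≠ 0} ≤ q) {a b : ℕ} (hbn : b ≤ n) :
    P.real {ω | blockSum y a b ω ≠ 0} ≤ (b - a : ℕ) * q := by
  calc P.real {ω | blockSum y a b ω ≠ 0}
      ≤ P.real (⋃ j ∈ Finset.Ioc a b, {ω | y j ω ≠ 0}) := by
        refine measureReal_mono (fun ω hω => ?_) (measure_ne_top P _)
        obtain ⟨j, hj, h⟩ := Finset.exists_ne_zero_of_sum_ne_zero hω
        exact Set.mem_biUnion hj h
    _ ≤ ∑ j ∈ Finset.Ioc a b, P.real {ω | y j ω ≠ 0} := measureReal_biUnion_finset_le _ _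
    _ ≤ ∑ j ∈ Finset.Ioc a b, q := Finset.sum_le_sum fun j hj => hq j (by
        simp only [Finset.mem_Ioc, Finset.mem_Icc] at hj ⊢; omega)
    _ = _ := by simp

/-- Approximate factorisation at position `b`, by means of a gap of length `m`. -/
lemma decouple {Ω : Type*} {mΩ : MeasurableSpace Ω} (P : Measure Ω) [IsProbabilityMeasure P]
    (ℱ : Filtration ℕ mΩ) (y : ℕ → Ω → ℝ) (hy : ∀ j, StronglyMeasurable[ℱ j] (y j)) {n : ℕ}
    {q : ℝ} (hq0 : 0 ≤ q) (hq : ∀ j ∈ Finset.Icc 1 n, P.real {ω | y j ω ≠ 0} ≤ q)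
    (α : ℕ → ℝ) (hα0 : ∀ k, 0 ≤ α k)
    (hA3 : ∀ i j, j ∈ Finset.Icc 1 n → i < j →
      ∀ v : (Fin (n - j + 1) → ℝ) → ℝ, Measurable v → (∀ x, |v x| ≤ 1) →
      ∀ᵐ ω ∂P, |(P[(fun ω' => v fun i' => y (j + (i' : ℕ)) ω') | ℱ i]) ω -
        ∫ ω', v (fun i' => y (j + (i' : ℕ)) ω') ∂P| ≤ α (j - i))
    (t : ℝ) (m : ℕ) {a b : ℕ} (hab : a ≤ b) (hbn : b ≤ n) :
    ‖charFn P (blockSum y a n) t - charFn P (blockSum y a b) t * charFn P (blockSum y b n) t‖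
      ≤ 4 * (m * q) + 2 * α (m + 1) := by
  have hyM : ∀ j, Measurable (y j) := fun j => ((hy j).mono (ℱ.le j)).measurable
  have hM := blockSum_measurable hyM
  obtain ⟨g, hg⟩ : ∃ g, g = min (b + m) n := ⟨_, rfl⟩
  have hbg : b ≤ g := by omega
  have hgn : g ≤ n := by omega
  have hgap : P.real {ω | blockSum y b g ω ≠ 0} ≤ m * q := by
    refine (blockSum_ne_zero_le P y hq hgn).trans ?_
    gcongr
    omega
  have e1 : ‖charFn P (blockSum y a n) t -
      charFn P (fun ω => blockSum y a b ω + blockSum y g n ω) t‖ ≤ 2 * (m * q) := by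
    refine (charFn_sub_le_prob P (hM a n) ((hM a b).add (hM g n)) t).trans ?_
    refine (mul_le_mul_of_nonneg_left (measureReal_mono fun ω hω => ?_) zero_le_two).trans
      (mul_le_mul_of_nonneg_left hgap zero_le_two)
    simp only [Set.mem_ofPred_eq] at hω ⊢
    rw [blockSum_add y hab hbn, blockSum_add y hbg hgn] at hω
    intro h0; apply hω; rw [h0, Pi.add_apply]; ring
  have e3 : ‖charFn P (blockSum y g n) t - charFn P (blockSum y b n) t‖ ≤ 2 * (m * q) := by
    refine (charFn_sub_le_prob P (hM g n) (hM b n) t).trans ?_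
    refine (mul_le_mul_of_nonneg_left (measureReal_mono fun ω hω => ?_) zero_le_two).trans
      (mul_le_mul_of_nonneg_left hgap zero_le_two)
    simp only [Set.mem_ofPred_eq] at hω ⊢
    rw [blockSum_add y hbg hgn] at hω
    intro h0; apply hω; rw [h0]; ring
  have e2 : ‖charFn P (fun ω => blockSum y a b ω + blockSum y g n ω) t -
      charFn P (blockSum y a b) t * charFn P (blockSum y g n) t‖ ≤ 2 * α (m + 1) := by
    by_cases hlt : b + m < n
    · obtain rfl : g = b + m := by omega
      have hU : StronglyMeasurable[ℱ b] (fun ω => Complex.exp (Complex.I * t * blockSum y a b ω)) := by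
        have h1 : Measurable[ℱ b] (blockSum y a b) := by
          unfold blockSum
          refine Finset.measurable_sum _ fun j hj => ?_
          exact ((hy j).mono (ℱ.mono (Finset.mem_Ioc.1 hj).2)).measurable
        have h2 : Measurable (fun x : ℝ => Complex.exp (Complex.I * t * x)) := by fun_prop
        exact (h2.comp h1).stronglyMeasurable
      have hsum : ∀ ω, blockSum y (b + m) n ω =
          ∑ i' : Fin (n - (b + m + 1) + 1), y (b + m + 1 + (i' : ℕ)) ω := by
        intro ω
        rw [Fin.sum_univ_eq_sum_range (fun i => y (b + m + 1 + i) ω), blockSum,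
          ← Finset.Ico_add_one_add_one_eq_Ioc, Finset.sum_Ico_eq_sum_range]
        congr 2; omega
      have hv : ∀ f : ℝ → ℝ, Measurable f → (∀ x, |f x| ≤ 1) →
          ‖(∫ ω, Complex.exp (Complex.I * t * blockSum y a b ω) *
              (f (t * blockSum y (b + m) n ω) : ℝ) ∂P) -
            charFn P (blockSum y a b) t *
              ((∫ ω, f (t * blockSum y (b + m) n ω) ∂P : ℝ) : ℂ)‖ ≤ α (m + 1) := by
        intro f hf hf1
        refine cov_le (ℱ.le b) P hU (fun ω => (norm_expI _ _).le) ?_ ?_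
        · refine Integrable.of_bound (C := 1) ?_ (ae_of_all _ fun ω => hf1 _)
          exact (hf.comp ((hM _ _).const_mul t)).aestronglyMeasurable
        · have := hA3 b (b + m + 1) (by simp; omega) (by omega) (fun x => f (t * ∑ i', x i'))
            (hf.comp ((Finset.measurable_sum _ fun i _ => measurable_pi_apply i).const_mul t))
            (fun x => hf1 _)
          rw [show b + m + 1 - b = m + 1 by omega] at this
          simpa only [hsum] using this
      have hc := hv Real.cos Real.measurable_cos Real.abs_cos_le_one
      have hs := hv Real.sin Real.measurable_sin Real.abs_sin_le_one
      have hexp : ∀ x : ℝ, Complex.exp (Complex.I * t * x) =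
          (Real.cos (t * x) : ℂ) + (Real.sin (t * x) : ℂ) * Complex.I := by
        intro x
        rw [mul_assoc, mul_comm, Complex.exp_mul_I]; push_cast; rfl
      have hUi := integrable_expI P (hM a b) t
      have hci : Integrable (fun ω => Real.cos (t * blockSum y (b + m) n ω)) P :=
        Integrable.of_bound (C := 1)
          (Real.measurable_cos.comp ((hM _ _).const_mul t)).aestronglyMeasurable
          (ae_of_all _ fun ω => Real.abs_cos_le_one _)
      have hsi : Integrable (fun ω => Real.sin (t * blockSum y (b + m) n ω)) P :=
        Integrable.of_bound (C := 1)
          (Real.measurable_sin.comp ((hM _ _).const_mul t)).aestronglyMeasurable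
          (ae_of_all _ fun ω => Real.abs_sin_le_one _)
      have hUc : Integrable (fun ω => Complex.exp (Complex.I * t * blockSum y a b ω) *
          (Real.cos (t * blockSum y (b + m) n ω) : ℂ)) P :=
        Integrable.bdd_mul (c := 1) hci.ofReal hUi.aestronglyMeasurable
          (ae_of_all _ fun ω => (norm_expI _ _).le)
      have hUs : Integrable (fun ω => Complex.exp (Complex.I * t * blockSum y a b ω) *
          (Real.sin (t * blockSum y (b + m) n ω) : ℂ)) P :=
        Integrable.bdd_mul (c := 1) hsi.ofReal hUi.aestronglyMeasurable
          (ae_of_all _ fun ω => (norm_expI _ _).le)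
      have k1 : charFn P (fun ω => blockSum y a b ω + blockSum y (b + m) n ω) t =
          (∫ ω, Complex.exp (Complex.I * t * blockSum y a b ω) *
            (Real.cos (t * blockSum y (b + m) n ω) : ℂ) ∂P) +
          (∫ ω, Complex.exp (Complex.I * t * blockSum y a b ω) *
            (Real.sin (t * blockSum y (b + m) n ω) : ℂ) ∂P) * Complex.I := by
        rw [← integral_mul_const, ← integral_add hUc (hUs.mul_const _)]
        unfold charFn
        congr 1; ext ω
        rw [expI_add, hexp (blockSum y (b + m) n ω)]; ring
      have k2 : charFn P (blockSum y (b + m) n) t =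
          ((∫ ω, Real.cos (t * blockSum y (b + m) n ω) ∂P : ℝ) : ℂ) +
          ((∫ ω, Real.sin (t * blockSum y (b + m) n ω) ∂P : ℝ) : ℂ) * Complex.I := by
        rw [← integral_complex_ofReal, ← integral_complex_ofReal, ← integral_mul_const,
          ← integral_add hci.ofReal (hsi.ofReal.mul_const _)]
        unfold charFn
        congr 1; ext ω
        rw [hexp (blockSum y (b + m) n ω)]
      rw [k1, k2]
      calc _ = ‖((∫ ω, Complex.exp (Complex.I * t * blockSum y a b ω) *
              (Real.cos (t * blockSum y (b + m) n ω) : ℝ) ∂P) -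
            charFn P (blockSum y a b) t *
              ((∫ ω, Real.cos (t * blockSum y (b + m) n ω) ∂P : ℝ) : ℂ)) +
            ((∫ ω, Complex.exp (Complex.I * t * blockSum y a b ω) *
              (Real.sin (t * blockSum y (b + m) n ω) : ℝ) ∂P) -
            charFn P (blockSum y a b) t *
              ((∫ ω, Real.sin (t * blockSum y (b + m) n ω) ∂P : ℝ) : ℂ)) * Complex.I‖ := by
            congr 1; ring
        _ ≤ _ := by
            refine (norm_add_le _ _).trans ?_
            rw [norm_mul, Complex.norm_I]; linarith
    · -- the gap exhausts the row, so the remaining block is empty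
      obtain rfl : g = n := by omega
      have : 0 ≤ 2 * α (m + 1) := by linarith [hα0 (m + 1)]
      simpa [charFn, blockSum] using this
  have e3' : ‖charFn P (blockSum y a b) t * charFn P (blockSum y g n) t -
      charFn P (blockSum y a b) t * charFn P (blockSum y b n) t‖ ≤ 2 * (m * q) := by
    rw [← mul_sub, norm_mul]
    calc _ ≤ 1 * ‖charFn P (blockSum y g n) t - charFn P (blockSum y b n) t‖ := by
          gcongr; exact norm_charFn_le P _ t
      _ ≤ _ := by linarith
  have h1 := norm_sub_le_norm_sub_add_norm_sub (charFn P (blockSum y a n) t)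
    (charFn P (fun ω => blockSum y a b ω + blockSum y g n ω) t)
    (charFn P (blockSum y a b) t * charFn P (blockSum y b n) t)
  have h2 := norm_sub_le_norm_sub_add_norm_sub
    (charFn P (fun ω => blockSum y a b ω + blockSum y g n ω) t)
    (charFn P (blockSum y a b) t * charFn P (blockSum y g n) t)
    (charFn P (blockSum y a b) t * charFn P (blockSum y b n) t)
  linarith

/-! ### A single block -/

/-- First-order expansion of the characteristic function of a block. The error comes from
`|e^{its} - 1| |e^{ity} - 1| ≤ 2 |t| |y| 1{s ≠ 0}`, applied with `s` a partial block sum and `y` the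
next variable. -/
lemma charFn_block {Ω : Type*} {mΩ : MeasurableSpace Ω} (P : Measure Ω) [IsProbabilityMeasure P]
    (y : ℕ → Ω → ℝ) (hy : ∀ j, Measurable (y j)) (hyi : ∀ j, Integrable (y j) P) {n : ℕ} {q : ℝ}
    (hc : ∀ i ∈ Finset.Icc 1 n, ∀ j ∈ Finset.Icc 1 n, i ≠ j →
      ∫ ω, |y j ω| * Set.indicator {ω' | y i ω' ≠ 0} 1 ω ∂P ≤ q ^ 2)
    (t : ℝ) (a k : ℕ) (hk : a + k ≤ n) :
    ‖charFn P (blockSum y a (a + k)) t - 1 - ∑ j ∈ Finset.Ioc a (a + k), (charFn P (y j) t - 1)‖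
      ≤ 2 * |t| * q ^ 2 * k ^ 2 := by
  induction k with
  | zero => simp [charFn, blockSum]
  | succ k ih =>
    have ih := ih (by omega)
    have hM := blockSum_measurable hy
    have hset : ∀ i, MeasurableSet {ω' | y i ω' ≠ 0} :=
      fun i => (measurableSet_eq_fun (hy i) measurable_const).compl
    have hint : ∀ i, Integrable (fun ω => |y (a + k + 1) ω| *
        Set.indicator {ω' | y i ω' ≠ 0} 1 ω) P := by
      intro i
      have := ((hyi (a + k + 1)).abs).indicator (hset i)
      refine this.congr (ae_of_all _ fun ω => ?_)
      by_cases h : ω ∈ {ω' | y i ω' ≠ 0}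
      · simp only [Set.indicator_of_mem h]; simp
      · simp only [Set.indicator_of_notMem h]; simp
    have hstep : ‖charFn P (blockSum y a (a + k + 1)) t - charFn P (blockSum y a (a + k)) t -
        (charFn P (y (a + k + 1)) t - 1)‖ ≤ 2 * |t| * q ^ 2 * k := by
      have hS : ∀ ω, blockSum y a (a + k + 1) ω = blockSum y a (a + k) ω + y (a + k + 1) ω := by
        intro ω
        rw [blockSum_add y (by omega : a ≤ a + k) (by omega : a + k ≤ a + k + 1)]
        simp [blockSum]
      have i1 := integrable_expI P (hM a (a + k + 1)) t
      have i2 := integrable_expI P (hM a (a + k)) t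
      have i3 := integrable_expI P (hy (a + k + 1)) t
      have heq : charFn P (blockSum y a (a + k + 1)) t - charFn P (blockSum y a (a + k)) t -
          (charFn P (y (a + k + 1)) t - 1) = ∫ ω,
          (Complex.exp (Complex.I * t * blockSum y a (a + k) ω) - 1) *
          (Complex.exp (Complex.I * t * y (a + k + 1) ω) - 1) ∂P := by
        have h1 : (1 : ℂ) = ∫ _, (1 : ℂ) ∂P := by simp
        unfold charFn
        nth_rewrite 1 [h1]
        rw [← integral_sub i1 i2, ← integral_sub i3 (integrable_const _),
          ← integral_sub (by exact i1.sub i2) (by exact i3.sub (integrable_const _))]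
        congr 1; ext ω
        rw [hS, expI_add]; ring
      rw [heq]
      calc _ ≤ ∫ ω, ∑ i ∈ Finset.Ioc a (a + k), 2 * |t| * (|y (a + k + 1) ω| *
            Set.indicator {ω' | y i ω' ≠ 0} 1 ω) ∂P := by
            refine norm_integral_le_of_norm_le
              (integrable_finsetSum _ fun i _ => (hint i).const_mul _) (ae_of_all _ fun ω => ?_)
            have hnn : ∀ i ∈ Finset.Ioc a (a + k), 0 ≤ 2 * |t| * (|y (a + k + 1) ω| *
                Set.indicator {ω' | y i ω' ≠ 0} 1 ω) := fun i _ => by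
              have : 0 ≤ Set.indicator {ω' | y i ω' ≠ 0} (1 : Ω → ℝ) ω :=
                Set.indicator_nonneg (fun _ _ => zero_le_one) _
              positivity
            by_cases h0 : blockSum y a (a + k) ω = 0
            · rw [h0]; simpa using Finset.sum_nonneg hnn
            · obtain ⟨i, hi, hne⟩ := Finset.exists_ne_zero_of_sum_ne_zero h0
              refine le_trans ?_ (Finset.single_le_sum hnn hi)
              rw [Set.indicator_of_mem (by exact hne), norm_mul]
              have b1 : ‖Complex.exp (Complex.I * t * blockSum y a (a + k) ω) - 1‖ ≤ 2 := by
                refine (norm_sub_le _ _).trans ?_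
                rw [norm_expI]; norm_num
              have b2 := norm_expI_sub_one_le t (y (a + k + 1) ω)
              calc _ ≤ 2 * (|t| * |y (a + k + 1) ω|) := by gcongr
                _ = _ := by simp; ring
        _ = ∑ i ∈ Finset.Ioc a (a + k), 2 * |t| * ∫ ω, (|y (a + k + 1) ω| *
            Set.indicator {ω' | y i ω' ≠ 0} 1 ω) ∂P := by
            rw [integral_finsetSum _ fun i _ => (hint i).const_mul _]
            simp_rw [integral_const_mul]
        _ ≤ ∑ i ∈ Finset.Ioc a (a + k), 2 * |t| * q ^ 2 := by
            refine Finset.sum_le_sum fun i hi => ?_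
            simp only [Finset.mem_Ioc] at hi
            gcongr
            exact hc i (by simp; omega) (a + k + 1) (by simp; omega) (by omega)
        _ = _ := by simp; ring
    have hsum : ∑ j ∈ Finset.Ioc a (a + (k + 1)), (charFn P (y j) t - 1) =
        ∑ j ∈ Finset.Ioc a (a + k), (charFn P (y j) t - 1) + (charFn P (y (a + k + 1)) t - 1) := by
      rw [← add_assoc, Finset.sum_Ioc_succ_top (by omega)]
    rw [hsum, ← add_assoc]
    calc _ = ‖(charFn P (blockSum y a (a + k)) t - 1 -
            ∑ j ∈ Finset.Ioc a (a + k), (charFn P (y j) t - 1)) +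
          (charFn P (blockSum y a (a + k + 1)) t - charFn P (blockSum y a (a + k)) t -
            (charFn P (y (a + k + 1)) t - 1))‖ := by congr 1; ring
      _ ≤ 2 * |t| * q ^ 2 * k ^ 2 + 2 * |t| * q ^ 2 * k := (norm_add_le _ _).trans (add_le_add ih hstep)
      _ ≤ _ := by
          have : 0 ≤ 2 * |t| * q ^ 2 := by positivity
          have hk0 : (0 : ℝ) ≤ k := Nat.cast_nonneg k
          push_cast
          nlinarith [mul_nonneg this hk0]

/-- Integrated form of (A4). -/
lemma charFn_single {Ω : Type*} {mΩ : MeasurableSpace Ω} (P : Measure Ω) [IsProbabilityMeasure P]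
    {Ω' : Type*} {mΩ' : MeasurableSpace Ω'} (P' : Measure Ω') [IsProbabilityMeasure P']
    {X : Ω → ℝ} (hX : Measurable X) (hXi : Integrable X P)
    {ξ : Ω' → ℝ} (hξ : Measurable ξ) (hξi : Integrable ξ P') (z : ℂ) {D : ℝ}
    (h : ∀ t : ℝ, ‖deriv (charFn P X) t - z * deriv (charFn P' ξ) t‖ ≤ D) (t : ℝ) :
    ‖charFn P X t - 1 - z * (charFn P' ξ t - 1)‖ ≤ D * |t| := by
  have d1 := charFn_differentiable P hX hXi
  have d2 := charFn_differentiable P' hξ hξi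
  have := Convex.norm_image_sub_le_of_norm_hasDerivWithin_le (𝕜 := ℝ)
    (f := fun s => charFn P X s - z * charFn P' ξ s)
    (f' := fun s => deriv (charFn P X) s - z * deriv (charFn P' ξ) s) (C := D) (s := Set.univ)
    (x := 0) (y := t)
    (fun s _ => ((d1 s).hasDerivAt.sub ((d2 s).hasDerivAt.const_mul z)).hasDerivWithinAt)
    (fun s _ => h s) convex_univ trivial trivial
  simp only [charFn_zero, sub_zero, Real.norm_eq_abs] at this
  rw [show charFn P X t - 1 - z * (charFn P' ξ t - 1) =
    charFn P X t - z * charFn P' ξ t - (1 - z * 1) by ring]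
  exact this

/-- A block `(a, a + k]` has characteristic function close to that of a compound Poisson variable
of intensity proportional to its length. -/
lemma block_exp {Ω : Type*} {mΩ : MeasurableSpace Ω} (P : Measure Ω) [IsProbabilityMeasure P]
    (y : ℕ → Ω → ℝ) (hy : ∀ j, Measurable (y j)) (hyi : ∀ j, Integrable (y j) P) {n : ℕ} {q : ℝ}
    (hc : ∀ i ∈ Finset.Icc 1 n, ∀ j ∈ Finset.Icc 1 n, i ≠ j →
      ∫ ω, |y j ω| * Set.indicator {ω' | y i ω' ≠ 0} 1 ω ∂P ≤ q ^ 2)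
    (t : ℝ) {d : ℂ} {D : ℝ} (hD : ∀ j ∈ Finset.Icc 1 n, ‖charFn P (y j) t - 1 - d‖ ≤ D)
    (a k : ℕ) (hk : a + k ≤ n) (hd : ‖d‖ * k ≤ 1) :
    ‖charFn P (blockSum y a (a + k)) t - Complex.exp (d * k)‖ ≤
      (2 * |t| * q ^ 2 + ‖d‖ ^ 2) * k ^ 2 + D * k := by
  have h1 := charFn_block P y hy hyi hc t a k hk
  have h2 : ‖∑ j ∈ Finset.Ioc a (a + k), (charFn P (y j) t - 1) - d * k‖ ≤ D * k := by
    have : ∑ j ∈ Finset.Ioc a (a + k), (charFn P (y j) t - 1) - d * k =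
        ∑ j ∈ Finset.Ioc a (a + k), (charFn P (y j) t - 1 - d) := by
      rw [Finset.sum_sub_distrib (g := fun _ => d)]; simp [mul_comm]
    rw [this]
    refine (norm_sum_le_of_le (f := fun j => charFn P (y j) t - 1 - d) (n := fun _ => D) _
      fun j hj => hD j ?_).trans ?_
    · simp only [Finset.mem_Ioc, Finset.mem_Icc] at hj ⊢; omega
    · simp [mul_comm]
  have hn : ‖d * k‖ = ‖d‖ * k := by simp
  have h3 := Complex.norm_exp_sub_one_sub_id_le (x := d * k) (by rw [hn]; exact hd)
  rw [hn] at h3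
  calc _ = ‖(charFn P (blockSum y a (a + k)) t - 1 -
          ∑ j ∈ Finset.Ioc a (a + k), (charFn P (y j) t - 1)) +
        (∑ j ∈ Finset.Ioc a (a + k), (charFn P (y j) t - 1) - d * k) -
        (Complex.exp (d * k) - 1 - d * k)‖ := by congr 1; ring
    _ ≤ 2 * |t| * q ^ 2 * k ^ 2 + D * k + (‖d‖ * k) ^ 2 :=
        (norm_sub_le _ _).trans (add_le_add ((norm_add_le _ _).trans (add_le_add h1 h2)) h3)
    _ = _ := by ring

/-! ### Telescoping over blocks -/

/-- Abstract telescoping: an array `ψ a b` of complex numbers of norm at most one that is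
multiplicative up to `δ` and close to `exp (d (b - a))` up to `η` on blocks of length at most `p`
is close to `exp (d (n - a))` on the final stretch, which is covered by `K` blocks. -/
lemma telescope (ψ : ℕ → ℕ → ℂ) (n p : ℕ) (d : ℂ) (hd : d.re ≤ 0) (δ η : ℝ)
    (hη0 : 0 ≤ η) (h1 : ∀ a b, ‖ψ a b‖ ≤ 1) (hnn : ψ n n = 1)
    (hδ : ∀ a b, a ≤ b → b ≤ n → ‖ψ a n - ψ a b * ψ b n‖ ≤ δ)
    (hη : ∀ a k, a + k ≤ n → k ≤ p → ‖ψ a (a + k) - Complex.exp (d * k)‖ ≤ η) (K : ℕ) :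
    ∀ a ≤ n, n - a ≤ K * p → ‖ψ a n - Complex.exp (d * (n - a : ℕ))‖ ≤ K * (δ + η) := by
  induction K with
  | zero =>
    intro a ha h
    obtain rfl : a = n := by omega
    simp [hnn]
  | succ K ih =>
    intro a ha h
    obtain ⟨k, hk⟩ : ∃ k, k = min p (n - a) := ⟨_, rfl⟩
    have hkn : a + k ≤ n := by omega
    have hkp : k ≤ p := by omega
    rw [Nat.succ_mul] at h
    have i1 := ih (a + k) hkn (by
      rcases le_total p (n - a) with h' | h'
      · rw [min_eq_left h'] at hk; omega
      · rw [min_eq_right h'] at hk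
        have : n - (a + k) = 0 := by omega
        omega)
    have i2 := hδ a (a + k) (by omega) hkn
    have i3 := hη a k hkn hkp
    have hexp : Complex.exp (d * (n - a : ℕ)) =
        Complex.exp (d * k) * Complex.exp (d * (n - (a + k) : ℕ)) := by
      rw [← Complex.exp_add, ← mul_add]
      congr 2
      have : n - a = k + (n - (a + k)) := by omega
      exact_mod_cast this
    have hexp1 : ‖Complex.exp (d * k)‖ ≤ 1 := by
      rw [Complex.norm_exp, Real.exp_le_one_iff]
      have : (d * k).re = d.re * k := by simp
      rw [this]
      exact mul_nonpos_of_nonpos_of_nonneg hd (Nat.cast_nonneg k)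
    rw [hexp]
    calc _ = ‖(ψ a n - ψ a (a + k) * ψ (a + k) n) +
          (ψ a (a + k) - Complex.exp (d * k)) * ψ (a + k) n +
          Complex.exp (d * k) * (ψ (a + k) n - Complex.exp (d * (n - (a + k) : ℕ)))‖ := by
            congr 1; ring
      _ ≤ δ + η * 1 + 1 * (K * (δ + η)) := by
          refine (norm_add_le _ _).trans (add_le_add ((norm_add_le _ _).trans (add_le_add i2 ?_)) ?_)
          · rw [norm_mul]; gcongr; exact h1 _ _
          · rw [norm_mul]; gcongr
      _ = _ := by push_cast; ring

/-- **Theorem 1.1, convergence part.** Under assumptions (A1)-(A4) on the triangular array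
`Y n j`, `j = 1, …, n`, adapted to the filtration `ℱ`, the row sums
`S n = ∑_{j=1}^n Y n j` converge in distribution to the compound Poisson law with intensity `μ`
and jumps distributed as `ξ`; equivalently, the characteristic functions of `S n` converge
pointwise to `exp (μ (φ t - 1))` where `φ` is the characteristic function of `ξ`. -/
theorem compound_poisson_clt
    {Ω : Type*} {mΩ : MeasurableSpace Ω} (P : Measure Ω) [IsProbabilityMeasure P]
    (ℱ : Filtration ℕ mΩ)
    (Y : ℕ → ℕ → Ω → ℝ)
    (hYint : ∀ n j, Integrable (Y n j) P)
    (hYadp : ∀ n j, StronglyMeasurable[ℱ j] (Y n j))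
    {Ω' : Type*} {mΩ' : MeasurableSpace Ω'} (P' : Measure Ω') [IsProbabilityMeasure P']
    (ξ : Ω' → ℝ) (hξmeas : Measurable ξ) (hξint : Integrable ξ P')
    (C1 : ℝ) (hC1 : 0 < C1)
    -- assumption (A1)
    (hA1a : ∀ n, 1 ≤ n → ∀ j ∈ Finset.Icc 1 n,
      P {ω | Y n j ω ≠ 0} ≤ ENNReal.ofReal (C1 / n))
    (hA1b : ∀ n, 1 ≤ n → ∀ j ∈ Finset.Icc 1 n, ∫ ω, |Y n j ω| ∂P ≤ C1 / n)
    (hA1c : ∀ n, 1 ≤ n → ∀ i ∈ Finset.Icc 1 n, ∀ j ∈ Finset.Icc 1 n, i ≠ j →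
      ∫ ω, |Y n j ω| * Set.indicator {ω' | Y n i ω' ≠ 0} 1 ω ∂P ≤ (C1 / n) ^ 2)
    -- assumption (A2)
    (ℓ : ℕ) (hℓ : 1 ≤ ℓ)
    (α : ℕ → ℝ) (hα0 : ∀ k, 0 ≤ α k) (hαdec : Antitone α)
    (hαlim : Tendsto α atTop (nhds 0))
    (hA2 : ∀ n, 1 ≤ n → ∀ i j, j ∈ Finset.Icc 1 n → i + ℓ ≤ j →
      ∀ᵐ ω ∂P, |(P[Y n j | ℱ i]) ω - ∫ x, Y n j x ∂P| ≤ C1 / n * α (j - i))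
    -- assumption (A3)
    (hA3 : ∀ n, 1 ≤ n → ∀ i j, j ∈ Finset.Icc 1 n → i < j →
      ∀ v : (Fin (n - j + 1) → ℝ) → ℝ, Measurable v → (∀ x, |v x| ≤ 1) →
      ∀ᵐ ω ∂P, |(P[(fun ω' => v fun i' => Y n (j + (i' : ℕ)) ω') | ℱ i]) ω -
        ∫ ω', v (fun i' => Y n (j + (i' : ℕ)) ω') ∂P| ≤ α (j - i))
    -- assumption (A4)
    (C2 μ : ℝ) (hC2 : 0 < C2) (hμ : 0 < μ)
    (hA4 : ∀ n, 1 ≤ n → ∀ j ∈ Finset.Icc 1 n, ∀ t : ℝ,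
      ‖deriv (charFn P (Y n j)) t - (n : ℂ)⁻¹ * (μ : ℂ) * deriv (charFn P' ξ) t‖ ≤ C2 / n ^ 2) :
    ∀ t : ℝ,
      Tendsto (fun n => charFn P (fun ω => ∑ j ∈ Finset.Icc 1 n, Y n j ω) t) atTop
        (nhds (Complex.exp ((μ : ℂ) * (charFn P' ξ t - 1)))) := by
  intro t
  have hYM : ∀ n j, Measurable (Y n j) := fun n j => ((hYadp n j).mono (ℱ.le j)).measurable
  obtain ⟨c, hcdef⟩ : ∃ c : ℂ, c = (μ : ℂ) * (charFn P' ξ t - 1) := ⟨_, rfl⟩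
  have hφ1 := norm_charFn_le P' ξ t
  have hcre : c.re ≤ 0 := by
    have : (charFn P' ξ t).re ≤ 1 := (Complex.re_le_norm _).trans hφ1
    rw [hcdef, Complex.re_ofReal_mul]
    refine mul_nonpos_of_nonneg_of_nonpos hμ.le ?_
    simpa using this
  rw [← hcdef]
  obtain ⟨A, hA⟩ : ∃ A : ℝ, A = 2 * |t| * C1 ^ 2 + ‖c‖ ^ 2 := ⟨_, rfl⟩
  have hA0 : 0 ≤ A := by rw [hA]; positivity
  -- the quantitative bound for a row of length `n ≥ K`, with blocks of length `n / K + 1 ≤ 2 n / K`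
  have key : ∀ K m n : ℕ, 0 < K → 2 * ‖c‖ ≤ K → K ≤ n →
      ‖charFn P (fun ω => ∑ j ∈ Finset.Icc 1 n, Y n j ω) t - Complex.exp c‖ ≤
        2 * K * α (m + 1) + 4 * A / K + (4 * K * m * C1 + 2 * C2 * |t|) / n := by
    intro K m n hK hcK hKn
    have hn : 1 ≤ n := by omega
    have hK0 : (0 : ℝ) < K := by exact_mod_cast hK
    have hn0 : (0 : ℝ) < n := by exact_mod_cast hn
    have hnC : (n : ℂ) ≠ 0 := by exact_mod_cast hn0.ne'
    have hp : ((n / K + 1 : ℕ) : ℝ) ≤ 2 * n / K := by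
      have h1 : ((n / K : ℕ) : ℝ) ≤ n / K := Nat.cast_div_le
      have h2 : (1 : ℝ) ≤ n / K := by
        rw [le_div_iff₀ hK0, one_mul]; exact_mod_cast hKn
      push_cast
      rw [mul_div_assoc]; linarith
    have hq : ∀ j ∈ Finset.Icc 1 n, P.real {ω | Y n j ω ≠ 0} ≤ C1 / n := fun j hj =>
      ENNReal.toReal_le_of_le_ofReal (by positivity) (hA1a n hn j hj)
    have hD : ∀ j ∈ Finset.Icc 1 n, ‖charFn P (Y n j) t - 1 - c / n‖ ≤ C2 / n ^ 2 * |t| := by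
      intro j hj
      have := charFn_single P P' (hYM n j) (hYint n j) hξmeas hξint _ (hA4 n hn j hj) t
      convert this using 3
      rw [hcdef]; field_simp
    have hdn : ‖c / n‖ = ‖c‖ / n := by simp
    have hη : ∀ a k, a + k ≤ n → k ≤ n / K + 1 →
        ‖charFn P (blockSum (Y n) a (a + k)) t - Complex.exp (c / n * k)‖ ≤
          4 * A / K ^ 2 + 2 * C2 * |t| / (n * K) := by
      intro a k hak hk
      have hk' : (k : ℝ) ≤ 2 * n / K := le_trans (by exact_mod_cast hk) hp
      refine (block_exp P (Y n) (hYM n) (hYint n) (hA1c n hn) t hD a k hak ?_).trans ?_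
      · rw [hdn]
        calc ‖c‖ / n * k ≤ ‖c‖ / n * (2 * n / K) := by gcongr
          _ = 2 * ‖c‖ / K := by field_simp
          _ ≤ 1 := by rw [div_le_one hK0]; exact hcK
      · rw [hdn]
        calc _ = A / n ^ 2 * k ^ 2 + C2 / n ^ 2 * |t| * k := by rw [hA]; field_simp
          _ ≤ A / n ^ 2 * (2 * n / K) ^ 2 + C2 / n ^ 2 * |t| * (2 * n / K) := by gcongr
          _ = _ := by field_simp; ring
    have hα1 := hα0 (m + 1)
    have htel := telescope (fun a b => charFn P (blockSum (Y n) a b) t) n (n / K + 1) (c / n)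
      (by
        rw [Complex.div_natCast_re]
        exact div_nonpos_of_nonpos_of_nonneg hcre hn0.le)
      (4 * (m * (C1 / n)) + 2 * α (m + 1)) (4 * A / K ^ 2 + 2 * C2 * |t| / (n * K))
      (by positivity) (fun a b => norm_charFn_le P _ t)
      (by simp [charFn, blockSum])
      (fun a b hab hbn => decouple P ℱ (Y n) (hYadp n) (by positivity) hq α hα0 (hA3 n hn) t m
        hab hbn) hη K 0 (Nat.zero_le n) (by
          have := Nat.lt_mul_div_succ n hK
          omega)
    have e1 : c / n * ((n - 0 : ℕ) : ℂ) = c := by rw [Nat.sub_zero]; field_simp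
    rw [e1] at htel
    refine htel.trans (le_of_eq ?_)
    field_simp
    ring
  rw [Metric.tendsto_atTop]
  intro ε hε
  obtain ⟨K, hK⟩ := exists_nat_gt (max (2 * ‖c‖) (12 * A / ε))
  have hK1 : 2 * ‖c‖ < K := (le_max_left _ _).trans_lt hK
  have hK2 : 12 * A / ε < K := (le_max_right _ _).trans_lt hK
  have hK0 : (0 : ℝ) < K := (by positivity : (0 : ℝ) ≤ 2 * ‖c‖).trans_lt hK1
  have hKA : 4 * A / K < ε / 3 := by
    rw [div_lt_iff₀ hε] at hK2
    rw [div_lt_iff₀ hK0]; linarith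
  obtain ⟨m, hm⟩ : ∃ m, 2 * K * α (m + 1) < ε / 3 := by
    have h : Tendsto (fun m => 2 * K * α (m + 1)) atTop (nhds (2 * K * 0)) :=
      ((tendsto_add_atTop_iff_nat 1).2 hαlim).const_mul _
    rw [mul_zero] at h
    exact (h.eventually (gt_mem_nhds (by positivity))).exists
  have hN : ∀ᶠ n : ℕ in atTop, (4 * K * m * C1 + 2 * C2 * |t|) / n < ε / 3 :=
    (tendsto_const_div_atTop_nhds_zero_nat _).eventually (gt_mem_nhds (by positivity))
  obtain ⟨N, hN⟩ := eventually_atTop.1 (hN.and (eventually_ge_atTop K))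
  refine ⟨N, fun n hn => ?_⟩
  obtain ⟨h1, h2⟩ := hN n hn
  rw [dist_eq_norm]
  have := key K m n (by exact_mod_cast hK0) hK1.le h2
  linarith
end

section
/- Let U, V, W be complex-valued random variables on a filtered probability space such that U is measurable with respect to F_{k−m} with |U| ≤ 1 a.s., V is measurable with respect to F_k and integrable, and |W| ≤ 1 a.s. Suppose |E(W | F_k) − E[W]| ≤ a₁ a.s., |E(W | F_{k−m}) − E[W]| ≤ a₂ a.s., and |E(V | F_{k−m}) − E[V]| ≤ b a.s. Then |E[UVW] − E[V] · E[UW]| ≤ E|V| · a₁ + b + |E[V]| · a₂. -/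
/-!
With `v = E V` and `w = E W`, split

`E (U V W) - v E (U W) = (E (U V W) - w E (U V)) + w (E (U V) - v E U) + v (w E U - E (U W))`.

Up to sign, each bracket has the form `E (Z X) - c E Z`, where `Z` is measurable with respect to a
sub-σ-algebra `𝒢` and `E (X | 𝒢)` is almost surely within `a` of `c`. The pull-out property gives
`E (Z X) - c E Z = E (Z (E (X | 𝒢) - c))`, hence the bound `E |Z| a`; this is
`norm_integral_mul_sub_le`. It is applied with `(Z, X)` equal to `(U V, W)`, `(U, V)`
and `(U, W)`, using `E |U V| ≤ E |V|`, `E |U| ≤ 1` and `|w| ≤ 1`.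
-/

open MeasureTheory ProbabilityTheory Filter Set

/-- If `Z` is `𝒢`-measurable and `E (X | 𝒢)` is a.s. within `a` of the constant `c`, then
`E (Z X)` is within `E |Z| * a` of `c * E Z`. -/
lemma norm_integral_mul_sub_le {Ω : Type*} {mΩ : MeasurableSpace Ω} {P : Measure Ω}
    [IsProbabilityMeasure P] {𝒢 : MeasurableSpace Ω} (h𝒢 : 𝒢 ≤ mΩ) {Z X : Ω → ℂ}
    (hZ : StronglyMeasurable[𝒢] Z) (hZint : Integrable Z P) (hX : Integrable X P)
    (hZX : Integrable (fun ω => Z ω * X ω) P) {c : ℂ} {a : ℝ}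
    (h : ∀ᵐ ω ∂P, ‖(P[X | 𝒢]) ω - c‖ ≤ a) :
    ‖(∫ ω, Z ω * X ω ∂P) - c * ∫ ω, Z ω ∂P‖ ≤ (∫ ω, ‖Z ω‖ ∂P) * a := by
  have hpull : P[fun ω => Z ω * X ω | 𝒢] =ᵐ[P] fun ω => Z ω * (P[X | 𝒢]) ω :=
    condExp_bilin_of_stronglyMeasurable_left (ContinuousLinearMap.mul ℝ ℂ) hZ hZX hX
  have hint : Integrable (fun ω => Z ω * (P[X | 𝒢]) ω) P :=
    integrable_condExp.congr hpull
  have heq : (∫ ω, Z ω * X ω ∂P) - c * ∫ ω, Z ω ∂P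
      = ∫ ω, Z ω * ((P[X | 𝒢]) ω - c) ∂P := by
    rw [← integral_condExp h𝒢, integral_congr_ae hpull, ← integral_const_mul,
      ← integral_sub hint (hZint.const_mul c)]
    congr 1
    ext ω
    ring
  rw [heq, ← integral_mul_const]
  refine norm_integral_le_of_norm_le (hZint.norm.mul_const a) ?_
  filter_upwards [h] with ω hω
  rw [norm_mul]
  gcongr

/-- **Decoupling lemma for `J₃`.** Let `U, V, W` be complex random variables with `U`
measurable w.r.t. `ℱ (k - m)` and `|U| ≤ 1` a.s., `V` measurable w.r.t. `ℱ k` and integrable,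
and `|W| ≤ 1` a.s. If `|E(W | ℱ k) - E W| ≤ a₁` a.s., `|E(W | ℱ (k - m)) - E W| ≤ a₂` a.s. and
`|E(V | ℱ (k - m)) - E V| ≤ b` a.s., then
`|E (U V W) - E V ⬝ E (U W)| ≤ E |V| ⬝ a₁ + b + |E V| ⬝ a₂`. -/
theorem decoupling_bound
    {Ω : Type*} {mΩ : MeasurableSpace Ω} (P : Measure Ω) [IsProbabilityMeasure P]
    (ℱ : Filtration ℕ mΩ)
    (k m : ℕ) (hm : 0 < m) (hkm : m < k)
    (U V W : Ω → ℂ)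
    (hU : StronglyMeasurable[ℱ (k - m)] U) (hUbdd : ∀ᵐ ω ∂P, ‖U ω‖ ≤ 1)
    (hV : StronglyMeasurable[ℱ k] V) (hVint : Integrable V P)
    (hW : AEStronglyMeasurable W P) (hWbdd : ∀ᵐ ω ∂P, ‖W ω‖ ≤ 1)
    (a₁ a₂ b : ℝ) (ha₁ : 0 ≤ a₁) (ha₂ : 0 ≤ a₂) (hb : 0 ≤ b)
    (hWk : ∀ᵐ ω ∂P, ‖(P[W | ℱ k]) ω - ∫ ω', W ω' ∂P‖ ≤ a₁)
    (hWkm : ∀ᵐ ω ∂P, ‖(P[W | ℱ (k - m)]) ω - ∫ ω', W ω' ∂P‖ ≤ a₂)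
    (hVkm : ∀ᵐ ω ∂P, ‖(P[V | ℱ (k - m)]) ω - ∫ ω', V ω' ∂P‖ ≤ b) :
    ‖(∫ ω, U ω * V ω * W ω ∂P) - (∫ ω, V ω ∂P) * ∫ ω, U ω * W ω ∂P‖
      ≤ (∫ ω, ‖V ω‖ ∂P) * a₁ + b + ‖∫ ω, V ω ∂P‖ * a₂ := by
  have hU' : AEStronglyMeasurable U P := (hU.mono (ℱ.le _)).aestronglyMeasurable
  have hUint : Integrable U P := Integrable.of_bound hU' 1 hUbdd
  have hWint : Integrable W P := Integrable.of_bound hW 1 hWbdd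
  have hUV : Integrable (fun ω => U ω * V ω) P := hVint.bdd_mul hU' hUbdd
  have hUW : Integrable (fun ω => U ω * W ω) P := hWint.bdd_mul hU' hUbdd
  have hUVW : Integrable (fun ω => U ω * V ω * W ω) P := hUV.mul_bdd hW hWbdd
  have hUVmeas : StronglyMeasurable[ℱ k] (fun ω => U ω * V ω) :=
    (hU.mono (ℱ.mono (Nat.sub_le k m))).mul hV
  have h₁ := norm_integral_mul_sub_le (ℱ.le k) hUVmeas hUV hWint hUVW hWk
  have h₂ := norm_integral_mul_sub_le (ℱ.le (k - m)) hU hUint hVint hUV hVkm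
  have h₃ := norm_integral_mul_sub_le (ℱ.le (k - m)) hU hUint hWint hUW hWkm
  have hU1 : ∫ ω, ‖U ω‖ ∂P ≤ 1 := by
    simpa using integral_mono_ae hUint.norm (integrable_const (1 : ℝ)) hUbdd
  have hUV1 : ∫ ω, ‖U ω * V ω‖ ∂P ≤ ∫ ω, ‖V ω‖ ∂P := by
    refine integral_mono_ae hUV.norm hVint.norm ?_
    filter_upwards [hUbdd] with ω hω
    simpa using mul_le_mul_of_nonneg_right hω (norm_nonneg (V ω))
  have hw : ‖∫ ω, W ω ∂P‖ ≤ 1 := by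
    simpa using norm_integral_le_of_norm_le_const hWbdd
  set v := ∫ ω, V ω ∂P
  set w := ∫ ω, W ω ∂P
  set u := ∫ ω, U ω ∂P
  set uv := ∫ ω, U ω * V ω ∂P
  set uw := ∫ ω, U ω * W ω ∂P
  set uvw := ∫ ω, U ω * V ω * W ω ∂P
  have h₂' : ‖uv - v * u‖ ≤ b := h₂.trans (mul_le_of_le_one_left hb hU1)
  have h₃' : ‖uw - w * u‖ ≤ a₂ := h₃.trans (mul_le_of_le_one_left ha₂ hU1)
  calc ‖uvw - v * uw‖
      = ‖(uvw - w * uv) + w * (uv - v * u) - v * (uw - w * u)‖ := by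
        congr 1
        ring
    _ ≤ ‖uvw - w * uv‖ + ‖w * (uv - v * u)‖ + ‖v * (uw - w * u)‖ :=
        (norm_sub_le _ _).trans (by gcongr; exact norm_add_le _ _)
    _ ≤ (∫ ω, ‖V ω‖ ∂P) * a₁ + b + ‖v‖ * a₂ := by
        rw [norm_mul, norm_mul]
        gcongr
        · exact h₁.trans (by gcongr)
        · exact (mul_le_of_le_one_left (norm_nonneg _) hw).trans h₂'
end
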